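/- Let Q: ℝ^d → ℝ be a nondegenerate indefinite quadratic form with d ≥ 5, let n ≥ 2, and let I₁, …, I_{n-1} be bounded intervals. Define P = {v = (v₁,…,v_n) ∈ ℝ^{nd} : Q(vᵢ) - Q(v_{i+1}) ∈ Iᵢ for 1 ≤ i ≤ n-1} and B(T) = {v ∈ ℝ^{nd} : ‖v‖ ≤ T}. Then there exists a positive constant C_{Q,n} depending only on Q, n, d such that lim_{T→∞} T^{-(nd - 2(n-1))} Vol(P ∩ B(T)) = C_{Q,n} · ∏_{i=1}^{n-1} |Iᵢ|. -/

import Mathlib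

open MeasureTheory Filter

/-!
Only a plane on which `Q` is definite matters: up to a sign and a linear change of variables,
`Q (u, x, y) = q u + (x² + y²) / 2`. The coordinates `√(2a) e^{iθ}` on the plane preserve area, so
after the shear `a = s - q u` the value `s` of `Q` becomes one of the coordinates of a
volume-preserving parametrization. For `m + 1` vectors, replacing the values `s₀, …, s_m` by `s₀`
and the differences `t` of consecutive values makes `t ∈ ℝ^m` a coordinate. Hence the part of a
bounded set where `t ∈ ε K` has measure of order `ε ^ m`, and by dominated convergence the leading
coefficient is `|K|` times the measure of the slice `t = 0`, provided that the boundary of the set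
is null on that slice; this holds for all but countably many balls. As `Q` is homogeneous of degree
two, the part of the ball of radius `T` where `t ∈ K` is a dilate of the part of a fixed ball of
radius `r` where `t ∈ ε K`, with `ε = (r / T)²`.
-/

open Set Metric Module
open scoped Topology ENNReal Pointwise Real

lemma exists_pos_measure_setOf_eq_eq_zero {α : Type*} [MeasurableSpace α] (μ : Measure α)
    [SFinite μ] {f : α → ℝ} (hf : Measurable f) : ∃ r, 0 < r ∧ μ {x | f x = r} = 0 := by
  by_contra! h
  have hcount : (Ioi (0 : ℝ)).Countable :=
    (Measure.countable_meas_level_set_pos hf).mono fun r hr => pos_iff_ne_zero.2 (h r hr)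
  simpa using hcount.measure_zero volume

lemma ae_prod_snd_ne_comp_fst {α β : Type*} [MeasurableSpace α] [MeasurableSpace β]
    [MeasurableEq β] (μ : Measure α) (ν : Measure β) [SFinite ν] [NullSingletonClass ν] {f : α → β}
    (hf : Measurable f) : ∀ᵐ p ∂μ.prod ν, p.2 ≠ f p.1 := by
  have hgraph : MeasurableSet {p : α × β | p.2 = f p.1} :=
    measurableSet_eq_fun measurable_snd (hf.comp measurable_fst)
  rw [ae_iff]
  simp only [not_not]
  rw [Measure.measure_prod_null hgraph]
  filter_upwards with x
  simp [preimage]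

lemma eventually_le_iff_of_ne {α β : Type*} [TopologicalSpace α] [LinearOrder β]
    [TopologicalSpace β] [OrderClosedTopology β] {f g : α → β} {x : α}
    (hf : ContinuousAt f x) (hg : ContinuousAt g x) (hne : f x ≠ g x) :
    ∀ᶠ y in 𝓝 x, (f y ≤ g y ↔ f x ≤ g x) := by
  rcases hne.lt_or_gt with h | h
  · filter_upwards [hf.eventually_lt hg h] with y hy using iff_of_true hy.le h.le
  · filter_upwards [hg.eventually_lt hf h] with y hy using iff_of_false hy.not_ge h.not_ge

lemma measurePreserving_pi_prod {ι α β γ : Type*} [Fintype ι] [MeasurableSpace α]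
    [MeasurableSpace β] [MeasurableSpace γ] {μ : Measure α} {ν : Measure β} [SigmaFinite μ]
    [SigmaFinite ν] {τ : Measure γ} [SigmaFinite τ] {D : Set (α × β)}
    {f : α × β → γ} (hf : MeasurePreserving f ((μ.prod ν).restrict D) τ) :
    MeasurePreserving (fun (p : (ι → α) × (ι → β)) i => f (p.1 i, p.2 i))
      (((Measure.pi fun _ => μ).prod (Measure.pi fun _ => ν)).restrict
        {p | ∀ i, (p.1 i, p.2 i) ∈ D}) (Measure.pi fun _ => τ) := by
  have hpi := measurePreserving_pi (fun _ : ι => (μ.prod ν).restrict D) (fun _ => τ) fun _ => hf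
  rw [← Measure.restrict_pi_pi] at hpi
  have hswap := (measurePreserving_arrowProdEquivProdArrow α β ι (fun _ => μ) fun _ => ν).symm
  have hdomain : (MeasurableEquiv.arrowProdEquivProdArrow α β ι).symm ⁻¹' univ.pi (fun _ => D) =
      {p | ∀ i, (p.1 i, p.2 i) ∈ D} := by
    ext p
    exact mem_univ_pi
  rw [← hdomain]
  exact hpi.comp (hswap.restrict_preimage_emb (MeasurableEquiv.measurableEmbedding _) _)

lemma eventually_mem_iff_of_notMem_frontier {α : Type*} [TopologicalSpace α] {A : Set α} {x : α}
    (hx : x ∉ frontier A) : ∀ᶠ y in 𝓝 x, y ∈ A ↔ x ∈ A := by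
  by_cases hxA : x ∈ A
  · filter_upwards [mem_interior_iff_mem_nhds.1 (by_contra fun h => hx ⟨subset_closure hxA, h⟩)]
      with y hy using iff_of_true hy hxA
  · rw [← frontier_compl] at hx
    filter_upwards [mem_interior_iff_mem_nhds.1 (by_contra fun h => hx ⟨subset_closure hxA, h⟩)]
      with y hy using iff_of_false hy hxA

lemma exists_eq_smul_map_of_isAddHaarMeasure {E F : Type*} [NormedAddCommGroup E]
    [NormedSpace ℝ E] [MeasurableSpace E] [BorelSpace E] [NormedAddCommGroup F] [NormedSpace ℝ F]
    [FiniteDimensional ℝ F] [MeasurableSpace F] [BorelSpace F] (e : E ≃L[ℝ] F) (μ : Measure E)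
    [μ.IsAddHaarMeasure] (ν : Measure F) [ν.IsAddHaarMeasure] :
    ∃ c : ℝ≥0∞, c ≠ 0 ∧ c ≠ ∞ ∧ ν = c • μ.map e := by
  have : (μ.map e).IsAddHaarMeasure := e.isAddHaarMeasure_map μ
  exact ⟨Measure.addHaarScalarFactor ν (μ.map e),
    ENNReal.coe_ne_zero.2 (Measure.addHaarScalarFactor_pos_of_isAddHaarMeasure ν _).ne',
    ENNReal.coe_ne_top, Measure.isAddLeftInvariant_eq_smul ν (μ.map e)⟩

section Fibration

variable {X E V : Type*} [MeasurableSpace X] [NormedAddCommGroup E] [NormedSpace ℝ E]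
  [FiniteDimensional ℝ E] [MeasurableSpace E] [BorelSpace E] [MeasurableSpace V]
  {χ : Measure X} {ρ : Measure E} [ρ.IsAddHaarMeasure]

lemma measure_prod_setOf_snd_mem_smul {S : Set (X × E)} (hS : MeasurableSet S) {K : Set E}
    (hK : MeasurableSet K) {ε : ℝ} (hε : 0 < ε) :
    χ.prod ρ {p ∈ S | p.2 ∈ ε • K} =
      ENNReal.ofReal (ε ^ finrank ℝ E) * χ.prod ρ {p | (p.1, ε • p.2) ∈ S ∧ p.2 ∈ K} := by
  have hscaled : MeasurableSet {p : X × E | (p.1, ε • p.2) ∈ S ∧ p.2 ∈ K} :=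
    (hS.preimage (by fun_prop)).inter (hK.preimage measurable_snd)
  have hslab : MeasurableSet {p ∈ S | p.2 ∈ ε • K} :=
    hS.inter ((hK.const_smul₀ ε).preimage measurable_snd)
  rw [Measure.prod_apply hslab, Measure.prod_apply hscaled,
    ← lintegral_const_mul _ (measurable_measure_prodMk_left hscaled)]
  refine lintegral_congr fun x => ?_
  have hslice : Prod.mk x ⁻¹' {p ∈ S | p.2 ∈ ε • K} =
      ε • (Prod.mk x ⁻¹' {p | (p.1, ε • p.2) ∈ S ∧ p.2 ∈ K}) := by
    ext e
    simp [mem_smul_set_iff_inv_smul_mem₀ hε.ne', smul_inv_smul₀ hε.ne']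
  rw [hslice, Measure.addHaar_smul_of_nonneg _ hε.le]

lemma tendsto_measure_prod_setOf_snd_mem_smul {S : Set (X × E)} (hS : MeasurableSet S)
    {B : Set X} (hB : MeasurableSet B) (hχB : χ B ≠ ∞) (hSB : ∀ p ∈ S, p.1 ∈ B)
    (hstable : ∀ᵐ x ∂χ, ∀ᶠ e in 𝓝 (0 : E), (x, e) ∈ S ↔ (x, 0) ∈ S)
    {K : Set E} (hK : MeasurableSet K) (hρK : ρ K ≠ ∞) :
    Tendsto (fun ε : ℝ => (ENNReal.ofReal (ε ^ finrank ℝ E))⁻¹ * χ.prod ρ {p ∈ S | p.2 ∈ ε • K})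
      (𝓝[>] 0) (𝓝 (χ {x | (x, 0) ∈ S} * ρ K)) := by
  have hscaled : Tendsto (fun ε : ℝ => χ.prod ρ {p | (p.1, ε • p.2) ∈ S ∧ p.2 ∈ K}) (𝓝[>] 0)
      (𝓝 (χ.prod ρ ({x | (x, 0) ∈ S} ×ˢ K))) := by
    refine tendsto_measure_of_ae_tendsto_indicator _
      ((hS.preimage measurable_prodMk_right).prod hK)
      (fun ε => (hS.preimage (by fun_prop)).inter (hK.preimage measurable_snd)) (hB.prod hK)
      (by rw [Measure.prod_prod]; exact ENNReal.mul_ne_top hχB hρK)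
      (.of_forall fun ε p hp => ⟨hSB (p.1, ε • p.2) hp.1, hp.2⟩) ?_
    filter_upwards [Measure.quasiMeasurePreserving_fst.ae hstable] with p hp
    have hzero : Tendsto (fun ε : ℝ => ε • p.2) (𝓝[>] 0) (𝓝 0) :=
      (Continuous.tendsto' (f := (· • p.2)) (by fun_prop) 0 0 (zero_smul ℝ p.2)).mono_left
        nhdsWithin_le_nhds
    filter_upwards [hzero.eventually hp] with ε hε using and_congr_left' hε
  rw [Measure.prod_prod] at hscaled
  refine hscaled.congr' ?_
  filter_upwards [self_mem_nhdsWithin] with ε (hε : 0 < ε)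
  rw [measure_prod_setOf_snd_mem_smul hS hK hε, ← mul_assoc,
    ENNReal.inv_mul_cancel (by simpa using pow_pos hε _) ENNReal.ofReal_ne_top, one_mul]

lemma tendsto_measure_preimage_smul_of_fibration {S : Set (X × E)} (hS : MeasurableSet S)
    {B : Set X} (hB : MeasurableSet B) (hχB : χ B ≠ ∞) (hSB : ∀ p ∈ S, p.1 ∈ B)
    (hstable : ∀ᵐ x ∂χ, ∀ᶠ e in 𝓝 (0 : E), (x, e) ∈ S ↔ (x, 0) ∈ S)
    {μ : Measure V} {Θ : X × E → V} (hΘ : MeasurePreserving Θ ((χ.prod ρ).restrict S) μ)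
    {F : V → E} (hF : Measurable F) (hFΘ : ∀ p ∈ S, F (Θ p) = p.2)
    {K : Set E} (hK : MeasurableSet K) (hρK : ρ K ≠ ∞) :
    Tendsto (fun ε : ℝ => (ENNReal.ofReal (ε ^ finrank ℝ E))⁻¹ * μ (F ⁻¹' (ε • K)))
      (𝓝[>] 0) (𝓝 (χ {x | (x, 0) ∈ S} * ρ K)) := by
  refine (tendsto_measure_prod_setOf_snd_mem_smul hS hB hχB hSB hstable hK hρK).congr fun ε => ?_
  rw [← hΘ.measure_preimage (hF (hK.const_smul₀ ε)).nullMeasurableSet, Measure.restrict_apply' hS]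
  congr 2
  ext p
  refine and_comm.trans (and_congr_left fun hp => ?_)
  rw [mem_preimage, mem_preimage, hFΘ p hp]

end Fibration

section Dilation

variable {H E : Type*} [NormedAddCommGroup H] [NormedSpace ℝ H] [AddCommGroup E] [Module ℝ E]

lemma setOf_mem_closedBall_eq_smul {f : H → E} (hf : ∀ (c : ℝ) x, f (c • x) = c ^ 2 • f x)
    {r T : ℝ} (hr : 0 < r) (hT : 0 < T) (K : Set E) :
    {x ∈ closedBall 0 T | f x ∈ K} =
      (T / r) • {x ∈ closedBall 0 r | f x ∈ (r / T) ^ 2 • K} := by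
  have hrT : 0 < r / T := div_pos hr hT
  ext x
  have hball : (r / T) • x ∈ closedBall (0 : H) r ↔ x ∈ closedBall 0 T := by
    rw [mem_closedBall_zero_iff, mem_closedBall_zero_iff, norm_smul_of_nonneg hrT.le,
      div_mul_eq_mul_div, div_le_iff₀ hT, mul_le_mul_iff_right₀ hr]
  have hdiff : f ((r / T) • x) ∈ (r / T) ^ 2 • K ↔ f x ∈ K := by
    rw [hf, smul_mem_smul_set_iff₀ (pow_ne_zero 2 hrT.ne')]
  rw [mem_smul_set_iff_inv_smul_mem₀ (div_pos hT hr).ne', inv_div]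
  exact (and_congr hball hdiff).symm

lemma tendsto_rpow_mul_measureReal_closedBall [FiniteDimensional ℝ H]
    [MeasurableSpace H] [BorelSpace H] (ν : Measure H) [ν.IsAddHaarMeasure]
    {f : H → E} (hf : ∀ (c : ℝ) x, f (c • x) = c ^ 2 • f x) (m : ℕ) {r : ℝ} (hr : 0 < r)
    {K : Set E} {C : ℝ≥0∞} (hC : C ≠ ∞)
    (hlim : Tendsto (fun ε : ℝ => (ENNReal.ofReal (ε ^ m))⁻¹ *
      ν {x ∈ closedBall 0 r | f x ∈ ε • K}) (𝓝[>] 0) (𝓝 C)) :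
    Tendsto (fun T : ℝ => T ^ (2 * m - finrank ℝ H : ℝ) * ν.real {x ∈ closedBall 0 T | f x ∈ K})
      atTop (𝓝 (r ^ (2 * m - finrank ℝ H : ℝ) * C.toReal)) := by
  have hε : Tendsto (fun T : ℝ => (r / T) ^ 2) atTop (𝓝[>] 0) := by
    refine tendsto_nhdsWithin_iff.2 ⟨?_, ?_⟩
    · simpa using (tendsto_const_nhds.div_atTop tendsto_id : Tendsto (r / ·) atTop (𝓝 0)).pow 2
    · filter_upwards [eventually_gt_atTop 0] with T hT using pow_pos (div_pos hr hT) 2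
  refine ((((ENNReal.tendsto_toReal hC).comp hlim).comp hε).const_mul _).congr' ?_
  filter_upwards [eventually_gt_atTop 0] with T hT
  have hpow (t : ℝ) (ht : 0 < t) :
      t ^ (2 * m - finrank ℝ H : ℝ) = t ^ (2 * m) / t ^ finrank ℝ H := by
    rw [Real.rpow_sub ht, Real.rpow_natCast, ← Real.rpow_natCast t (2 * m), Nat.cast_mul,
      Nat.cast_ofNat]
  rw [setOf_mem_closedBall_eq_smul hf hr hT, measureReal_def,
    Measure.addHaar_smul_of_nonneg _ (by positivity), hpow r hr, hpow T hT]
  simp only [Function.comp_apply, ENNReal.toReal_mul, ENNReal.toReal_inv]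
  rw [ENNReal.toReal_ofReal (by positivity), ENNReal.toReal_ofReal (by positivity), ← pow_mul,
    div_pow r T (2 * m), div_pow T r]
  field_simp

end Dilation

section ActionAngle

/-- The action-angle map `(θ, a) ↦ √(2a) e^{iθ}` of the plane: polar coordinates in which the radius
is replaced by the action `a`, half of the squared radius, so that area is preserved. -/
noncomputable def actionAngle (p : ℝ × ℝ) : ℝ × ℝ :=
  polarCoord.symm (√(2 * p.2), p.1)

lemma continuous_actionAngle : Continuous actionAngle :=
  continuous_polarCoord_symm.comp (by fun_prop)

lemma actionAngle_sq_add_sq {θ a : ℝ} (ha : 0 ≤ a) :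
    (actionAngle (θ, a)).1 ^ 2 + (actionAngle (θ, a)).2 ^ 2 = 2 * a := by
  simp only [actionAngle, polarCoord_symm_apply, mul_pow, ← mul_add, Real.cos_sq_add_sin_sq,
    mul_one]
  exact Real.sq_sqrt (by positivity)

lemma setLIntegral_Ioi_mul_eq_sqrt (f : ℝ → ℝ≥0∞) :
    ∫⁻ r in Ioi 0, ENNReal.ofReal r * f r = ∫⁻ a in Ioi 0, f √(2 * a) := by
  have himage : (fun r : ℝ => r ^ 2 / 2) '' Ioi 0 = Ioi 0 := by
    ext a
    refine ⟨?_, fun (ha : 0 < a) => ⟨√(2 * a), Real.sqrt_pos.2 (by positivity), ?_⟩⟩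
    · rintro ⟨r, hr : 0 < r, rfl⟩
      exact mem_Ioi.2 (by positivity)
    · simp only [Real.sq_sqrt (show 0 ≤ 2 * a by positivity)]
      ring
  have hderiv : ∀ r ∈ Ioi (0 : ℝ), HasDerivWithinAt (fun r : ℝ => r ^ 2 / 2) r (Ioi 0) r :=
    fun r _ => by simpa using ((hasDerivAt_pow 2 r).div_const 2).hasDerivWithinAt
  have hmono : MonotoneOn (fun r : ℝ => r ^ 2 / 2) (Ioi 0) := fun r (hr : 0 < r) s _ hrs => by
    simp only
    gcongr
  have hsub := lintegral_image_eq_lintegral_deriv_mul_of_monotoneOn measurableSet_Ioi hderiv hmono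
    fun a => f √(2 * a)
  rw [himage] at hsub
  rw [hsub]
  refine setLIntegral_congr_fun measurableSet_Ioi fun r (hr : 0 < r) => ?_
  simp only [mul_div_cancel₀ (r ^ 2) (two_ne_zero' ℝ), Real.sqrt_sq hr.le]

lemma measurePreserving_actionAngle :
    MeasurePreserving actionAngle (volume.restrict (Ioo (-π) π ×ˢ Ioi 0)) volume := by
  have hmeas := continuous_actionAngle.measurable
  refine ⟨hmeas, Measure.ext_of_lintegral _ fun f hf => ?_⟩
  have hpolar : Measurable fun p : ℝ × ℝ => ENNReal.ofReal p.1 • f (polarCoord.symm p) :=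
    measurable_fst.ennreal_ofReal.smul (hf.comp continuous_polarCoord_symm.measurable)
  rw [lintegral_map hf hmeas, ← lintegral_comp_polarCoord_symm f, polarCoord_target,
    Measure.volume_eq_prod, ← Measure.prod_restrict, ← Measure.prod_restrict,
    lintegral_prod (fun p => f (actionAngle p)) (hf.comp hmeas).aemeasurable,
    lintegral_prod_symm' _ hpolar]
  exact lintegral_congr fun θ =>
    (setLIntegral_Ioi_mul_eq_sqrt fun r => f (polarCoord.symm (r, θ))).symm

end ActionAngle

section ConsecutiveDifferences

/-- The differences `σ 0 - σ 1, …, σ (m - 1) - σ m` of a finite sequence. -/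
def consecutiveDiff {m : ℕ} (σ : Fin (m + 1) → ℝ) (i : Fin m) : ℝ :=
  σ i.castSucc - σ i.succ

/-- The linear map recording the first term and the consecutive differences of a sequence. -/
def headDiff (m : ℕ) : (Fin (m + 1) → ℝ) →ₗ[ℝ] ℝ × (Fin m → ℝ) where
  toFun σ := (σ 0, consecutiveDiff σ)
  map_add' _ _ := Prod.ext rfl (funext fun _ => add_sub_add_comm ..)
  map_smul' c _ := Prod.ext rfl (funext fun _ => (mul_sub c _ _).symm)

lemma headDiff_injective (m : ℕ) : Function.Injective (headDiff m) := by
  refine (injective_iff_map_eq_zero _).2 fun σ hσ => funext fun i => ?_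
  induction i using Fin.induction with
  | zero => exact congrArg Prod.fst hσ
  | succ i ih =>
    have hi : σ i.castSucc - σ i.succ = 0 := congrFun (congrArg Prod.snd hσ) i
    exact (sub_eq_zero.1 hi).symm.trans ih

/-- The coordinates on sequences given by the first term and the consecutive differences. -/
noncomputable def headDiffEquiv (m : ℕ) : (Fin (m + 1) → ℝ) ≃L[ℝ] ℝ × (Fin m → ℝ) :=
  ((headDiff m).linearEquivOfInjective (headDiff_injective m)
    (by simp [add_comm])).toContinuousLinearEquiv

variable {m : ℕ}

lemma consecutiveDiff_neg (σ : Fin (m + 1) → ℝ) :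
    consecutiveDiff (fun i => -σ i) = -consecutiveDiff σ :=
  funext fun _ => (neg_sub_neg ..).trans (neg_sub ..).symm

lemma headDiffEquiv_apply (σ : Fin (m + 1) → ℝ) :
    headDiffEquiv m σ = (σ 0, consecutiveDiff σ) :=
  rfl

lemma headDiffEquiv_symm_apply_zero (p : ℝ × (Fin m → ℝ)) : (headDiffEquiv m).symm p 0 = p.1 :=
  congrArg Prod.fst ((headDiffEquiv m).apply_symm_apply p)

lemma consecutiveDiff_headDiffEquiv_symm (p : ℝ × (Fin m → ℝ)) :
    consecutiveDiff ((headDiffEquiv m).symm p) = p.2 :=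
  congrArg Prod.snd ((headDiffEquiv m).apply_symm_apply p)

lemma headDiffEquiv_symm_prod_zero (s : ℝ) : (headDiffEquiv m).symm (s, 0) = fun _ => s := by
  rw [ContinuousLinearEquiv.symm_apply_eq, headDiffEquiv_apply]
  exact Prod.ext rfl (funext fun _ => (sub_self s).symm)

variable (m) in
lemma exists_measurePreserving_headDiffEquiv_symm :
    ∃ c : ℝ≥0∞, c ≠ 0 ∧ c ≠ ∞ ∧
      MeasurePreserving (headDiffEquiv m).symm (volume.prod (c • volume)) volume := by
  obtain ⟨c, hc0, hc, hmap⟩ := exists_eq_smul_map_of_isAddHaarMeasure (headDiffEquiv m).symm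
    (volume.prod volume) volume
  refine ⟨c, hc0, hc, (headDiffEquiv m).symm.continuous.measurable, ?_⟩
  rw [Measure.prod_smul_right, Measure.map_smul, ← hmap]

end ConsecutiveDifferences

section LevelCoordinates

variable {G : Type*}

/-- The sum of a function `q` on `G` and the positive definite quadratic form `(x² + y²) / 2` on a
plane. Up to a linear change of variables, any quadratic form which is positive definite on some
plane takes this shape. -/
noncomputable def planeForm (q : G → ℝ) (v : G × ℝ × ℝ) : ℝ :=
  q v.1 + (v.2.1 ^ 2 + v.2.2 ^ 2) / 2

/-- The parametrization of `G × ℝ²` whose last coordinate is the value of `planeForm q`: on each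
fibre over `u : G` it is `actionAngle`, with the action shifted by `q u`. -/
noncomputable def levelCoord (q : G → ℝ) (p : (G × ℝ) × ℝ) : G × ℝ × ℝ :=
  (p.1.1, actionAngle (p.1.2, p.2 - q p.1.1))

/-- The set of `((u, θ), s)` on which `levelCoord q` is a coordinate system. -/
def levelDomain (q : G → ℝ) : Set ((G × ℝ) × ℝ) :=
  {p | p.1.2 ∈ Ioo (-π) π ∧ q p.1.1 < p.2}

lemma planeForm_levelCoord {q : G → ℝ} {p : (G × ℝ) × ℝ} (hp : p ∈ levelDomain q) :
    planeForm q (levelCoord q p) = p.2 := by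
  rw [planeForm, levelCoord, actionAngle_sq_add_sq (sub_nonneg.2 hp.2.le),
    mul_div_cancel_left₀ _ two_ne_zero, add_sub_cancel]

lemma measurePreserving_levelCoord [MeasurableSpace G] (μ : Measure G) [SigmaFinite μ] {q : G → ℝ}
    (hq : Measurable q) :
    MeasurePreserving (levelCoord q) (((μ.prod volume).prod volume).restrict (levelDomain q))
      (μ.prod volume) := by
  have hshear : MeasurePreserving (fun p : G × ℝ × ℝ => (p.1, p.2.1, p.2.2 - q p.1))
      (μ.prod volume) (μ.prod volume) :=
    (MeasurePreserving.id μ).skew_product (g := fun u (x : ℝ × ℝ) => (x.1, x.2 - q u))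
      (by fun_prop) (.of_forall fun u =>
        ((MeasurePreserving.id volume).prod (measurePreserving_sub_right volume (q u))).map_eq)
  have hpolar : MeasurePreserving (Prod.map id actionAngle)
      ((μ.prod volume).restrict (univ ×ˢ Ioo (-π) π ×ˢ Ioi 0)) (μ.prod volume) := by
    rw [← Measure.prod_restrict, Measure.restrict_univ]
    exact (MeasurePreserving.id μ).prod measurePreserving_actionAngle
  have hdomain : (fun p : (G × ℝ) × ℝ => (p.1.1, p.1.2, p.2 - q p.1.1)) ⁻¹'
      (univ ×ˢ Ioo (-π) π ×ˢ Ioi 0) = levelDomain q := by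
    ext p
    simp [levelDomain]
  rw [← hdomain]
  exact hpolar.comp ((hshear.comp (measurePreserving_prodAssoc μ volume volume)).restrict_preimage
    (MeasurableSet.univ.prod (measurableSet_Ioo.prod measurableSet_Ioi)))

variable {m : ℕ}

/-- The measure on the coordinates `(z, s)` of `levelFamily`. -/
noncomputable abbrev levelMeasure [MeasurableSpace G] (μ : Measure G) (m : ℕ) :
    Measure ((Fin (m + 1) → G × ℝ) × ℝ) :=
  (Measure.pi fun _ => μ.prod volume).prod volume

/-- The coordinates `(z, s)` and `t` on `(G × ℝ²)^(m + 1)`, where `t` collects the consecutive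
differences of the values of `planeForm q`, `s` is the first value, and `z` collects the remaining
coordinates of `levelCoord q` on each factor. -/
noncomputable def levelFamily (q : G → ℝ) (p : ((Fin (m + 1) → G × ℝ) × ℝ) × (Fin m → ℝ))
    (i : Fin (m + 1)) : G × ℝ × ℝ :=
  levelCoord q (p.1.1 i, (headDiffEquiv m).symm (p.1.2, p.2) i)

/-- The set on which `levelFamily q` is a coordinate system. -/
def levelFamilyDomain (q : G → ℝ) : Set (((Fin (m + 1) → G × ℝ) × ℝ) × (Fin m → ℝ)) :=
  {p | ∀ i, (p.1.1 i, (headDiffEquiv m).symm (p.1.2, p.2) i) ∈ levelDomain q}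

lemma planeForm_levelFamily {q : G → ℝ} {p : ((Fin (m + 1) → G × ℝ) × ℝ) × (Fin m → ℝ)}
    (hp : p ∈ levelFamilyDomain q) :
    planeForm q ∘ levelFamily q p = (headDiffEquiv m).symm (p.1.2, p.2) :=
  funext fun i => planeForm_levelCoord (hp i)

lemma measurePreserving_levelFamily [MeasurableSpace G] (μ : Measure G) [SigmaFinite μ]
    {q : G → ℝ} (hq : Measurable q) {ρ : Measure (Fin m → ℝ)} [SFinite ρ]
    (hρ : MeasurePreserving (headDiffEquiv m).symm (volume.prod ρ) volume) :
    MeasurePreserving (levelFamily q)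
      (((levelMeasure μ m).prod ρ).restrict (levelFamilyDomain q))
      (Measure.pi fun _ : Fin (m + 1) => μ.prod volume) := by
  have hdomain : MeasurableSet {p : (Fin (m + 1) → G × ℝ) × (Fin (m + 1) → ℝ) |
      ∀ i, (p.1 i, p.2 i) ∈ levelDomain q} := by
    simp only [levelDomain, mem_ofPred_eq, ofPred_forall]
    exact .iInter fun i => .inter (measurableSet_Ioo.preimage (by fun_prop))
      (measurableSet_lt (f := fun p : (Fin (m + 1) → G × ℝ) × (Fin (m + 1) → ℝ) => q (p.1 i).1)
        (by fun_prop) (by fun_prop))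
  exact (measurePreserving_pi_prod (measurePreserving_levelCoord μ hq)).comp
    ((((MeasurePreserving.id (Measure.pi fun _ => μ.prod volume)).prod hρ).comp
      (measurePreserving_prodAssoc _ volume ρ)).restrict_preimage hdomain)

end LevelCoordinates

section LevelFamily

variable {G : Type*} {m : ℕ}

lemma continuous_planeForm [TopologicalSpace G] {q : G → ℝ} (hq : Continuous q) :
    Continuous (planeForm q) := by
  unfold planeForm
  fun_prop

lemma continuous_levelFamily [TopologicalSpace G] {q : G → ℝ} (hq : Continuous q) :
    Continuous (levelFamily q (m := m)) :=
  continuous_pi fun i => .prodMk (by fun_prop) (continuous_actionAngle.comp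
    (.prodMk (by fun_prop) (.sub (by fun_prop) (hq.comp (by fun_prop)))))

lemma isOpen_levelFamilyDomain [TopologicalSpace G] {q : G → ℝ} (hq : Continuous q) :
    IsOpen (levelFamilyDomain q (m := m)) := by
  simp only [levelFamilyDomain, levelDomain, mem_ofPred_eq, ofPred_forall]
  exact isOpen_iInter_of_finite fun i => .inter (isOpen_Ioo.preimage (by fun_prop))
    (isOpen_lt (hq.comp (by fun_prop)) (by fun_prop))

lemma ae_eventually_mem_levelFamilyDomain_iff [MeasurableSpace G] (μ : Measure G) [SigmaFinite μ]
    {q : G → ℝ} (hq : Measurable q) :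
    ∀ᵐ x ∂levelMeasure μ m,
      ∀ᶠ t in 𝓝 0, (x, t) ∈ levelFamilyDomain q ↔ (x, 0) ∈ levelFamilyDomain q := by
  have hne : ∀ᵐ x ∂levelMeasure μ m, ∀ i, x.2 ≠ q (x.1 i).1 :=
    ae_all_iff.2 fun i => ae_prod_snd_ne_comp_fst _ volume
      (f := fun z : Fin (m + 1) → G × ℝ => q (z i).1)
      (by fun_prop)
  filter_upwards [hne] with x hx
  have hlevel (i : Fin (m + 1)) : ∀ᶠ t in 𝓝 0,
      (headDiffEquiv m).symm (x.2, t) i ≤ q (x.1 i).1 ↔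
        (headDiffEquiv m).symm (x.2, 0) i ≤ q (x.1 i).1 :=
    eventually_le_iff_of_ne (by fun_prop) continuousAt_const
      (by rw [headDiffEquiv_symm_prod_zero]; exact hx i)
  filter_upwards [eventually_all.2 hlevel] with t ht
  exact forall_congr' fun i => and_congr_right' (by rw [← not_le, ← not_le, ht i])

lemma exists_isCompact_fst_mem_of_mem_levelFamilyDomain [PseudoMetricSpace G] [ProperSpace G]
    {q : G → ℝ} (hq : Continuous q) {A : Set (Fin (m + 1) → G × ℝ × ℝ)}
    (hA : Bornology.IsBounded A) :
    ∃ B : Set ((Fin (m + 1) → G × ℝ) × ℝ), IsCompact B ∧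
      ∀ p ∈ levelFamilyDomain q, levelFamily q p ∈ A → p.1 ∈ B := by
  have hcompact (i : Fin (m + 1)) : IsCompact (closure ((fun v => v i) '' A)) :=
    (hA.image_eval i).isCompact_closure
  refine ⟨(univ.pi fun i : Fin (m + 1) =>
      (Prod.fst '' closure ((fun v => v i) '' A)) ×ˢ Icc (-π) π) ×ˢ
    (planeForm q '' closure ((fun v => v 0) '' A)),
    (isCompact_univ_pi fun i => ((hcompact i).image continuous_fst).prod isCompact_Icc).prod
      ((hcompact 0).image (continuous_planeForm hq)), fun p hp hpA => ⟨fun i _ => ⟨?_, ?_⟩, ?_⟩⟩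
  · exact ⟨_, subset_closure (mem_image_of_mem _ hpA), rfl⟩
  · exact Ioo_subset_Icc_self (hp i).1
  · refine ⟨_, subset_closure (mem_image_of_mem _ hpA), ?_⟩
    exact (congrFun (planeForm_levelFamily hp) 0).trans (headDiffEquiv_symm_apply_zero _)

lemma isOpenPosMeasure_levelMeasure [TopologicalSpace G] [MeasurableSpace G] (μ : Measure G)
    [SigmaFinite μ] [μ.IsOpenPosMeasure] : (levelMeasure μ m).IsOpenPosMeasure :=
  have := Measure.pi.isOpenPosMeasure fun _ : Fin (m + 1) => μ.prod (volume : Measure ℝ)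
  Measure.prod.instIsOpenPosMeasure

lemma nonempty_setOf_mem_levelFamilyDomain_lt [TopologicalSpace G] [Zero G] {q : G → ℝ}
    (hq : Continuous q) (hq0 : q 0 = 0) {N : (Fin (m + 1) → G × ℝ × ℝ) → ℝ} (hN : Continuous N)
    {r : ℝ} (hr : N 0 < r) :
    {x | (x, 0) ∈ levelFamilyDomain q ∧ N (levelFamily q (x, 0)) < r}.Nonempty := by
  have hzero : levelFamily q (((0 : Fin (m + 1) → G × ℝ), 0), 0) = 0 := by
    funext i
    simp [levelFamily, levelCoord, actionAngle, headDiffEquiv_symm_prod_zero, hq0]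
  have hlt : ∀ᶠ s in 𝓝 (0 : ℝ), N (levelFamily q ((0, s), 0)) < r :=
    (hN.comp ((continuous_levelFamily hq).comp (by fun_prop))).continuousAt.eventually_lt
      continuousAt_const (by simpa [hzero] using hr)
  obtain ⟨s, hs, hs0 : 0 < s⟩ :=
    ((hlt.filter_mono nhdsWithin_le_nhds).and (self_mem_nhdsWithin (s := Ioi 0))).exists
  refine ⟨(0, s), fun i => ⟨⟨neg_lt_zero.2 Real.pi_pos, Real.pi_pos⟩, ?_⟩, hs⟩
  simpa [headDiffEquiv_symm_prod_zero, hq0] using hs0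

end LevelFamily

section Asymptotics

variable {G : Type*} [MetricSpace G] [ProperSpace G] [MeasurableSpace G] [BorelSpace G]
  (μ : Measure G) [IsLocallyFiniteMeasure μ] {q : G → ℝ} {m : ℕ}

lemma tendsto_measure_setOf_consecutiveDiff_planeForm_mem_smul (hq : Continuous q)
    {A : Set (Fin (m + 1) → G × ℝ × ℝ)} (hA : MeasurableSet A) (hbdd : Bornology.IsBounded A)
    (hfrontier : ∀ᵐ x ∂levelMeasure μ m, levelFamily q (x, 0) ∉ frontier A)
    {ρ : Measure (Fin m → ℝ)} [ρ.IsAddHaarMeasure]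
    (hρ : MeasurePreserving (headDiffEquiv m).symm (volume.prod ρ) volume)
    {K : Set (Fin m → ℝ)} (hK : MeasurableSet K) (hρK : ρ K ≠ ∞) :
    Tendsto (fun ε : ℝ => (ENNReal.ofReal (ε ^ m))⁻¹ *
        Measure.pi (fun _ => μ.prod (volume : Measure (ℝ × ℝ)))
          {v ∈ A | consecutiveDiff (planeForm q ∘ v) ∈ ε • K})
      (𝓝[>] 0) (𝓝 (levelMeasure μ m
          {x | levelFamily q (x, 0) ∈ A ∧ (x, 0) ∈ levelFamilyDomain q} * ρ K)) := by
  have hΘ := continuous_levelFamily hq (m := m)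
  have hΘA : MeasurableSet (levelFamily q (m := m) ⁻¹' A) := hΘ.measurable hA
  obtain ⟨B, hB, hAB⟩ := exists_isCompact_fst_mem_of_mem_levelFamilyDomain hq hbdd
  have hpreserving := (measurePreserving_levelFamily μ hq.measurable hρ).restrict_preimage hA
  rw [Measure.restrict_restrict hΘA] at hpreserving
  have hF : Continuous fun v : Fin (m + 1) → G × ℝ × ℝ => consecutiveDiff (planeForm q ∘ v) := by
    have := continuous_planeForm hq
    unfold consecutiveDiff Function.comp
    fun_prop
  have hstable : ∀ᵐ x ∂levelMeasure μ m, ∀ᶠ t in 𝓝 0,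
      (x, t) ∈ levelFamily q ⁻¹' A ∩ levelFamilyDomain q ↔
        (x, 0) ∈ levelFamily q ⁻¹' A ∩ levelFamilyDomain q := by
    filter_upwards [ae_eventually_mem_levelFamilyDomain_iff μ hq.measurable, hfrontier]
      with x hdomain hx
    have hΘx : Tendsto (fun t => levelFamily q (x, t)) (𝓝 0) (𝓝 (levelFamily q (x, 0))) :=
      (hΘ.comp (by fun_prop)).continuousAt
    filter_upwards [hdomain, hΘx.eventually (eventually_mem_iff_of_notMem_frontier hx)]
      with t ht hmem using and_congr hmem ht
  have hlim := tendsto_measure_preimage_smul_of_fibration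
    (hΘA.inter (isOpen_levelFamilyDomain hq).measurableSet) hB.measurableSet
    hB.measure_lt_top.ne (fun p hp => hAB p hp.2 hp.1) hstable hpreserving hF.measurable
    (fun p hp => by rw [planeForm_levelFamily hp.2, consecutiveDiff_headDiffEquiv_symm]) hK hρK
  refine hlim.congr fun ε => ?_
  rw [Measure.restrict_apply' hA, finrank_fin_fun, inter_comm]
  rfl

theorem exists_tendsto_measure_setOf_consecutiveDiff_planeForm_mem_smul [Zero G]
    [μ.IsOpenPosMeasure] (hq : Continuous q) (hq0 : q 0 = 0)
    {N : (Fin (m + 1) → G × ℝ × ℝ) → ℝ} (hN : Continuous N) (hN0 : N 0 = 0)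
    (hbdd : ∀ r, Bornology.IsBounded {v | N v ≤ r}) :
    ∃ r : ℝ, 0 < r ∧ ∃ C : ℝ≥0∞, C ≠ 0 ∧ C ≠ ∞ ∧
      ∀ K : Set (Fin m → ℝ), MeasurableSet K → volume K ≠ ∞ →
        Tendsto (fun ε : ℝ => (ENNReal.ofReal (ε ^ m))⁻¹ *
            Measure.pi (fun _ => μ.prod (volume : Measure (ℝ × ℝ)))
              {v | N v ≤ r ∧ consecutiveDiff (planeForm q ∘ v) ∈ ε • K})
          (𝓝[>] 0) (𝓝 (C * volume K)) := by
  obtain ⟨c, hc0, hc, hρ⟩ := exists_measurePreserving_headDiffEquiv_symm m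
  have : (c • (volume : Measure (Fin m → ℝ))).IsAddHaarMeasure := .smul _ hc0 hc
  have := isOpenPosMeasure_levelMeasure μ (m := m)
  have hNΘ : Continuous fun x => N (levelFamily q (x, 0)) :=
    hN.comp ((continuous_levelFamily hq).comp (by fun_prop))
  obtain ⟨r, hr, hnull⟩ := exists_pos_measure_setOf_eq_eq_zero (levelMeasure μ m) hNΘ.measurable
  obtain ⟨B, hB, hrB⟩ := exists_isCompact_fst_mem_of_mem_levelFamilyDomain hq (hbdd r)
  have hfrontier : ∀ᵐ x ∂levelMeasure μ m, levelFamily q (x, 0) ∉ frontier {v | N v ≤ r} := by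
    filter_upwards [measure_eq_zero_iff_ae_notMem.1 hnull] with x hx hmem
    exact hx (frontier_le_subset_eq hN continuous_const hmem)
  have hpos : 0 < levelMeasure μ m
      {x | N (levelFamily q (x, 0)) ≤ r ∧ (x, 0) ∈ levelFamilyDomain q} :=
    ((((isOpen_levelFamilyDomain hq).preimage (by fun_prop)).inter
      (isOpen_lt hNΘ continuous_const)).measure_pos _
      (nonempty_setOf_mem_levelFamilyDomain_lt hq hq0 hN (hN0.trans_lt hr))).trans_le
      (measure_mono fun x hx => ⟨hx.2.le, hx.1⟩)
  have hfin : levelMeasure μ m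
      {x | N (levelFamily q (x, 0)) ≤ r ∧ (x, 0) ∈ levelFamilyDomain q} ≠ ∞ :=
    measure_ne_top_of_subset (fun x hx => hrB _ hx.2 hx.1) hB.measure_lt_top.ne
  refine ⟨r, hr, _, mul_ne_zero hpos.ne' hc0, ENNReal.mul_ne_top hfin hc, fun K hK hvol => ?_⟩
  have hlim := tendsto_measure_setOf_consecutiveDiff_planeForm_mem_smul μ hq
    (measurableSet_le hN.measurable measurable_const) (hbdd r) hfrontier hρ hK
    (by simpa using ENNReal.mul_ne_top hc hvol)
  rwa [Measure.smul_apply, smul_eq_mul, ← mul_assoc] at hlim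

end Asymptotics

section Smul

variable {G : Type*} [AddCommGroup G] [Module ℝ G] {q : G → ℝ} {m : ℕ}

lemma planeForm_smul (hq : ∀ (c : ℝ) u, q (c • u) = c ^ 2 * q u) (c : ℝ) (v : G × ℝ × ℝ) :
    planeForm q (c • v) = c ^ 2 * planeForm q v := by
  change q (c • v.1) + ((c * v.2.1) ^ 2 + (c * v.2.2) ^ 2) / 2 = c ^ 2 * planeForm q v
  rw [hq, planeForm]
  ring

lemma consecutiveDiff_planeForm_smul (hq : ∀ (c : ℝ) u, q (c • u) = c ^ 2 * q u) (c : ℝ)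
    (v : Fin (m + 1) → G × ℝ × ℝ) :
    consecutiveDiff (planeForm q ∘ (c • v)) = c ^ 2 • consecutiveDiff (planeForm q ∘ v) := by
  funext i
  simp only [consecutiveDiff, Function.comp_apply, Pi.smul_apply, planeForm_smul hq, smul_eq_mul,
    mul_sub]

end Smul

section Ball

variable {G H : Type*} [NormedAddCommGroup G] [NormedSpace ℝ G] [FiniteDimensional ℝ G]
  [NormedAddCommGroup H] [NormedSpace ℝ H] [MeasurableSpace H] [BorelSpace H] {q : G → ℝ} {m : ℕ}

theorem exists_tendsto_rpow_mul_measureReal_consecutiveDiff_planeForm_mem (ν : Measure H)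
    [ν.IsAddHaarMeasure] (L : (Fin (m + 1) → G × ℝ × ℝ) ≃L[ℝ] H) (hqc : Continuous q)
    (hq : ∀ (c : ℝ) u, q (c • u) = c ^ 2 * q u) :
    ∃ C : ℝ, 0 < C ∧ ∀ K : Set (Fin m → ℝ), MeasurableSet K → volume K ≠ ∞ →
      Tendsto (fun T : ℝ => T ^ (2 * m - finrank ℝ H : ℝ) *
          ν.real {x ∈ closedBall 0 T | consecutiveDiff (planeForm q ∘ L.symm x) ∈ K})
        atTop (𝓝 (C * volume.real K)) := by
  have : FiniteDimensional ℝ H := L.toLinearEquiv.finiteDimensional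
  borelize G
  have : ((Measure.addHaar : Measure G).prod (volume : Measure (ℝ × ℝ))).IsAddHaarMeasure :=
    inferInstance
  have := Measure.pi.isAddHaarMeasure fun _ : Fin (m + 1) =>
    (Measure.addHaar : Measure G).prod (volume : Measure (ℝ × ℝ))
  obtain ⟨c, hc0, hc, hν⟩ := exists_eq_smul_map_of_isAddHaarMeasure L
    (Measure.pi fun _ => (Measure.addHaar : Measure G).prod (volume : Measure (ℝ × ℝ))) ν
  obtain ⟨r, hr, C, hC0, hC, hlim⟩ :=
    exists_tendsto_measure_setOf_consecutiveDiff_planeForm_mem_smul Measure.addHaar hqc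
      (by simpa using hq 0 0) (N := fun v => ‖L v‖) (by fun_prop) (by simp) fun r => by
        simpa [closedBall] using
          L.antilipschitz.isBounded_preimage (isBounded_closedBall (x := 0) (r := r))
  refine ⟨r ^ (2 * m - finrank ℝ H : ℝ) * (c * C).toReal, mul_pos (by positivity)
    (ENNReal.toReal_pos (mul_ne_zero hc0 hC0) (ENNReal.mul_ne_top hc hC)), fun K hK hvol => ?_⟩
  have hball := tendsto_rpow_mul_measureReal_closedBall ν
    (f := fun x => consecutiveDiff (planeForm q ∘ L.symm x)) (fun t x => by
      rw [map_smul, consecutiveDiff_planeForm_smul hq]) m hr (K := K)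
    (ENNReal.mul_ne_top hc (ENNReal.mul_ne_top hC hvol)) ?_
  · rwa [← mul_assoc c, ENNReal.toReal_mul, ← mul_assoc] at hball
  refine (ENNReal.Tendsto.const_mul (hlim K hK hvol) (.inr hc)).congr fun ε => ?_
  rw [hν, Measure.smul_apply, smul_eq_mul, mul_left_comm,
    show ⇑L = L.toHomeomorph.toMeasurableEquiv from rfl, MeasurableEquiv.map_apply]
  congr 3
  ext v
  simp

end Ball

section DiagonalForm

variable {ι : Type*} [Fintype ι]

lemma exists_ne_mul_pos (hι : 2 < Fintype.card ι) {w : ι → ℝ} (hw : ∀ i, w i ≠ 0) :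
    ∃ i j, i ≠ j ∧ 0 < w i * w j := by
  obtain ⟨i, j, hij, hsign⟩ := Fintype.exists_ne_map_eq_of_card_lt (fun i => decide (0 < w i)) hι
  rw [decide_eq_decide] at hsign
  refine ⟨i, j, hij, ?_⟩
  rcases (hw i).lt_or_gt with hi | hi
  · exact mul_pos_of_neg_of_neg hi ((hw j).lt_of_le (not_lt.1 (hsign.not.1 hi.not_gt)))
  · exact mul_pos hi (hsign.1 hi)

lemma exists_continuousLinearEquiv_planeForm_eq_sum [DecidableEq ι] (w : ι → ℝ) {i j : ι}
    (hij : i ≠ j) (hi : 0 < w i) (hj : 0 < w j) :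
    ∃ L : (ι → ℝ) ≃L[ℝ] (({i, j}ᶜ : Finset ι) → ℝ) × ℝ × ℝ,
      ∀ x, planeForm (fun u => ∑ k : ({i, j}ᶜ : Finset ι), w k * u k ^ 2) (L x) =
        ∑ k, w k * x k ^ 2 := by
  let f : (ι → ℝ) →ₗ[ℝ] (({i, j}ᶜ : Finset ι) → ℝ) × ℝ × ℝ :=
    (LinearMap.funLeft ℝ ℝ Subtype.val).prod
      ((√(2 * w i) • LinearMap.proj i).prod (√(2 * w j) • LinearMap.proj j))
  have hinj : Function.Injective f := by
    refine (injective_iff_map_eq_zero f).2 fun x hx => funext fun k => ?_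
    have hxi : √(2 * w i) * x i = 0 := congrArg (·.2.1) hx
    have hxj : √(2 * w j) * x j = 0 := congrArg (·.2.2) hx
    by_cases hk : k ∈ ({i, j} : Finset ι)
    · rcases Finset.mem_insert.1 hk with rfl | hk
      · exact (mul_eq_zero.1 hxi).resolve_left (by positivity)
      · rw [Finset.mem_singleton.1 hk]
        exact (mul_eq_zero.1 hxj).resolve_left (by positivity)
    · exact congrFun (congrArg Prod.fst hx) ⟨k, Finset.mem_compl.2 hk⟩
  have hdim : finrank ℝ (ι → ℝ) = finrank ℝ ((({i, j}ᶜ : Finset ι) → ℝ) × ℝ × ℝ) := by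
    have hcard := Finset.card_compl_add_card ({i, j} : Finset ι)
    rw [Finset.card_pair hij] at hcard
    rw [finrank_prod, finrank_prod, finrank_fintype_fun_eq_card, finrank_fintype_fun_eq_card,
      Fintype.card_coe, finrank_self, ← hcard]
  refine ⟨(f.linearEquivOfInjective hinj hdim).toContinuousLinearEquiv, fun x => ?_⟩
  have hplane : ((√(2 * w i) * x i) ^ 2 + (√(2 * w j) * x j) ^ 2) / 2 =
      ∑ k ∈ {i, j}, w k * x k ^ 2 := by
    rw [Finset.sum_pair hij, mul_pow, mul_pow, Real.sq_sqrt (by positivity),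
      Real.sq_sqrt (by positivity)]
    ring
  rw [← Finset.sum_compl_add_sum {i, j}, ← hplane, ← Finset.sum_coe_sort]
  rfl

theorem exists_tendsto_rpow_mul_volume_consecutiveDiff_sum_mem (m : ℕ) {w : ι → ℝ}
    (hw : ∃ i j, i ≠ j ∧ 0 < w i ∧ 0 < w j) (g : (ι → ℝ) ≃L[ℝ] (ι → ℝ)) :
    ∃ C : ℝ, 0 < C ∧ ∀ K : Set (Fin m → ℝ), MeasurableSet K → volume K ≠ ∞ →
      Tendsto (fun T : ℝ => T ^ (2 * m - (m + 1) * Fintype.card ι : ℝ) *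
          volume.real {v : EuclideanSpace ℝ (Fin (m + 1) × ι) | v ∈ closedBall 0 T ∧
            consecutiveDiff (fun i => ∑ k, w k * g (fun j => v (i, j)) k ^ 2) ∈ K})
        atTop (𝓝 (C * volume.real K)) := by
  classical
  obtain ⟨i, j, hij, hi, hj⟩ := hw
  obtain ⟨L, hL⟩ := exists_continuousLinearEquiv_planeForm_eq_sum w hij hi hj
  let M : EuclideanSpace ℝ (Fin (m + 1) × ι) ≃L[ℝ]
      (Fin (m + 1) → (({i, j}ᶜ : Finset ι) → ℝ) × ℝ × ℝ) :=
    ((EuclideanSpace.equiv (Fin (m + 1) × ι) ℝ).trans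
      (LinearEquiv.curry ℝ ℝ (Fin (m + 1)) ι).toContinuousLinearEquiv).trans
        (ContinuousLinearEquiv.piCongrRight fun _ => g.trans L)
  have hM (v : EuclideanSpace ℝ (Fin (m + 1) × ι)) (i : Fin (m + 1)) :
      M v i = L (g fun j => v (i, j)) :=
    rfl
  have hlim := exists_tendsto_rpow_mul_measureReal_consecutiveDiff_planeForm_mem volume M.symm
    (q := fun u => ∑ k : ({i, j}ᶜ : Finset ι), w k * u k ^ 2) (by fun_prop) fun c u => by
      simp only [Pi.smul_apply, smul_eq_mul, mul_pow, Finset.mul_sum, mul_left_comm]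
  simpa only [finrank_euclideanSpace, Fintype.card_prod, Fintype.card_fin, Nat.cast_mul,
    Nat.cast_add_one, M.symm_symm, Function.comp_def, hM, hL] using hlim

end DiagonalForm

theorem exists_tendsto_rpow_mul_volume_consecutiveDiff_sum_mem_of_mul_pos {ι : Type*} [Fintype ι]
    (m : ℕ) {w : ι → ℝ} (hw : ∃ i j, i ≠ j ∧ 0 < w i * w j) (g : (ι → ℝ) ≃L[ℝ] (ι → ℝ)) :
    ∃ C : ℝ, 0 < C ∧ ∀ K : Set (Fin m → ℝ), MeasurableSet K → volume K ≠ ∞ →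
      Tendsto (fun T : ℝ => T ^ (2 * m - (m + 1) * Fintype.card ι : ℝ) *
          volume.real {v : EuclideanSpace ℝ (Fin (m + 1) × ι) | v ∈ closedBall 0 T ∧
            consecutiveDiff (fun i => ∑ k, w k * g (fun j => v (i, j)) k ^ 2) ∈ K})
        atTop (𝓝 (C * volume.real K)) := by
  obtain ⟨i, j, hij, hsign⟩ := hw
  rcases pos_and_pos_or_neg_and_neg_of_mul_pos hsign with hpos | hneg
  · exact exists_tendsto_rpow_mul_volume_consecutiveDiff_sum_mem m ⟨i, j, hij, hpos⟩ g
  obtain ⟨C, hC, hlim⟩ := exists_tendsto_rpow_mul_volume_consecutiveDiff_sum_mem m (w := -w)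
    ⟨i, j, hij, neg_pos.2 hneg.1, neg_pos.2 hneg.2⟩ g
  refine ⟨C, hC, fun K hK hvol => ?_⟩
  simpa only [Pi.neg_apply, neg_mul, Finset.sum_neg_distrib, consecutiveDiff_neg, Set.neg_mem_neg,
    measureReal_def, Measure.measure_neg] using
    hlim (-K) hK.neg (by rwa [Measure.measure_neg])

theorem stmt_16_general (d n : ℕ) (hn : 1 ≤ n) (Q : (Fin d → ℝ) → ℝ)
    (g : (Fin d → ℝ) ≃ₗ[ℝ] (Fin d → ℝ)) (w : Fin d → ℝ) (hw : ∃ i j, i ≠ j ∧ 0 < w i * w j)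
    (hQ : ∀ v, Q v = ∑ i : Fin d, w i * (g v i) ^ 2) :
    ∃ C : ℝ, 0 < C ∧
      ∀ K : Set (Fin (n - 1) → ℝ), MeasurableSet K → volume K ≠ ∞ →
        Tendsto (fun T : ℝ =>
            T ^ (-((n : ℝ) * d - 2 * ((n : ℝ) - 1))) *
              (volume {v : EuclideanSpace ℝ (Fin n × Fin d) |
                (fun i : Fin (n - 1) =>
                  Q (fun j => v (⟨i.1, by have := i.2; omega⟩, j)) -
                      Q (fun j => v (⟨i.1 + 1, by have := i.2; omega⟩, j))) ∈ K ∧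
                  ‖v‖ ≤ T}).toReal)
          atTop (𝓝 (C * (volume K).toReal)) := by
  obtain ⟨m, rfl⟩ := Nat.exists_eq_add_of_le' hn
  obtain ⟨C, hC, hlim⟩ := exists_tendsto_rpow_mul_volume_consecutiveDiff_sum_mem_of_mul_pos m hw
    g.toContinuousLinearEquiv
  refine ⟨C, hC, fun K hK hvol => (hlim K hK hvol).congr fun T => ?_⟩
  congr 2
  · push_cast [Fintype.card_fin]
    ring
  · ext v
    simp only [mem_closedBall_zero_iff, hQ, mem_ofPred_eq]
    exact and_comm

theorem stmt_16 (d n p q : ℕ) (hd : 5 ≤ d) (hn : 2 ≤ n) (hp : 1 ≤ p) (hq : 1 ≤ q)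
    (hpq : p + q = d)
    (Q : (Fin d → ℝ) → ℝ)
    (g : (Fin d → ℝ) ≃ₗ[ℝ] (Fin d → ℝ))
    (hQ : ∀ v, Q v = ∑ i : Fin d, (if (i : ℕ) < p then (1 : ℝ) else -1) * (g v i) ^ 2) :
    ∃ C : ℝ, 0 < C ∧
      ∀ a b : Fin (n - 1) → ℝ, (∀ i, a i ≤ b i) →
        Tendsto (fun T : ℝ =>
            T ^ (-((n : ℝ) * d - 2 * ((n : ℝ) - 1))) *
              (volume {v : EuclideanSpace ℝ (Fin n × Fin d) |
                (∀ i : Fin (n - 1),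
                  Q (fun j => v (⟨i.1, by have := i.2; omega⟩, j)) -
                      Q (fun j => v (⟨i.1 + 1, by have := i.2; omega⟩, j)) ∈
                    Set.Icc (a i) (b i)) ∧ ‖v‖ ≤ T}).toReal)
          atTop (nhds (C * ∏ i : Fin (n - 1), (b i - a i))) := by
  have hw : ∃ i j : Fin d, i ≠ j ∧
      0 < (if (i : ℕ) < p then (1 : ℝ) else -1) * (if (j : ℕ) < p then (1 : ℝ) else -1) :=
    exists_ne_mul_pos (by rw [Fintype.card_fin]; omega) fun i => by split_ifs <;> norm_num
  obtain ⟨C, hC, hlim⟩ := stmt_16_general d n (by omega) Q g _ hw hQ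
  refine ⟨C, hC, fun a b hab => ?_⟩
  rw [← Real.volume_Icc_pi_toReal hab]
  simpa only [← pi_univ_Icc, mem_univ_pi] using
    hlim (Icc a b) measurableSet_Icc isCompact_Icc.measure_lt_top.ne
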